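/- Let X be a locally compact Polish space and let G be a bounded group of lattice isomorphisms of C₀(X), with weights a_g and homeomorphisms φ_g (g ∈ G), such that: (i) both families {a_g : g ∈ G} and {φ_g : g ∈ G} are equicontinuous on every compact subset of X; (ii) for every t ∈ X the orbit {φ_g(t) : g ∈ G} is nowhere dense in X; (iii) G is relatively SOT-closed, meaning that whenever a sequence (gₙ) ⊂ G converges in the strong operator topology to a lattice isomorphism T of C₀(X), then T ∈ G. Let m_G : X → (0,∞) be the continuous function m_G(t) = (inf_{g ∈ G} a_g(t))⁻¹. Then there exists a lattice norm N on C₀(X), equivalent to the supremum norm, such that the group of lattice isomorphisms T of C₀(X) satisfying N(T x) = N(x) for all x is exactly {x ↦ m_G · g(m_G⁻¹ · x) : g ∈ G}. -/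

import Mathlib

open ZeroAtInfty Filter Topology Metric

noncomputable section

/-- Pointwise supremum of two continuous functions vanishing at infinity. -/
def c0sup {X : Type*} [TopologicalSpace X] (f g : C₀(X, ℝ)) : C₀(X, ℝ) where
  toFun := fun t => max (f t) (g t)
  continuous_toFun := (map_continuous f).max (map_continuous g)
  zero_at_infty' := by simpa using (zero_at_infty f).max (zero_at_infty g)

section Basic

variable {X : Type*} [MetricSpace X]

theorem aux_abs_le_norm (f : C₀(X, ℝ)) (t : X) : |f t| ≤ ‖f‖ := by
  rw [← ZeroAtInftyContinuousMap.norm_toBCF_eq_norm]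
  exact f.toBCF.norm_coe_le_norm t

theorem aux_norm_le (f : C₀(X, ℝ)) {r : ℝ} (hr : 0 ≤ r) (h : ∀ t, |f t| ≤ r) : ‖f‖ ≤ r := by
  rw [← ZeroAtInftyContinuousMap.norm_toBCF_eq_norm]
  exact (BoundedContinuousFunction.norm_le hr).2 h

/-- A bump function. -/
theorem aux_bump [LocallyCompactSpace X] {K U : Set X} (hK : IsCompact K) (hU : IsOpen U)
    (hKU : K ⊆ U) : ∃ f : C₀(X, ℝ), (∀ t ∈ K, f t = 1) ∧ (∀ t ∉ U, f t = 0) ∧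
      (∀ t, 0 ≤ f t) ∧ (∀ t, f t ≤ 1) := by
  obtain ⟨f, h1, h0, hc, hI⟩ := exists_continuous_one_zero_of_isCompact hK hU.isClosed_compl
    (Set.disjoint_compl_right_iff_subset.2 hKU)
  exact ⟨⟨f, hc.is_zero_at_infty⟩, fun t ht => h1 ht, fun t ht => h0 ht, fun t => (hI t).1,
    fun t => (hI t).2⟩

theorem aux_bump_pt [LocallyCompactSpace X] {s : X} {U : Set X} (hU : IsOpen U)
    (hs : s ∈ U) : ∃ f : C₀(X, ℝ), f s = 1 ∧ (∀ t ∉ U, f t = 0) ∧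
      (∀ t, 0 ≤ f t) ∧ (∀ t, f t ≤ 1) := by
  obtain ⟨f, h1, h⟩ := aux_bump (isCompact_singleton (x := s)) hU (by simpa using hs)
  exact ⟨f, h1 s rfl, h⟩

theorem aux_c0sup_apply (f g : C₀(X, ℝ)) (t : X) : c0sup f g t = max (f t) (g t) := rfl

theorem aux_compact (f : C₀(X, ℝ)) {ε : ℝ} (hε : 0 < ε) : IsCompact {t | ε ≤ |f t|} := by
  have h1 : IsClosed {t | ε ≤ |f t|} := isClosed_le continuous_const (map_continuous f).abs
  have h2 : ∀ᶠ t in cocompact X, |f t| < ε := by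
    have := (zero_at_infty f).abs
    rw [abs_zero] at this
    exact this.eventually_lt_const hε
  obtain ⟨K, hK, hKs⟩ := mem_cocompact.1 h2
  refine hK.of_isClosed_subset h1 fun t ht => ?_
  by_contra hn
  have h3 : |f t| < ε := hKs hn
  exact absurd h3 (not_lt.2 ht)

/-- minimum of finitely many functions under a lattice functional -/
theorem aux_lat_inf (l : C₀(X, ℝ) →L[ℝ] ℝ)
    (hl : ∀ f g, l (c0sup f g) = max (l f) (l g)) (f g : C₀(X, ℝ)) :
    l (-(c0sup (-f) (-g))) = min (l f) (l g) := by
  rw [map_neg, hl, map_neg, map_neg, max_neg_neg, neg_neg]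

theorem aux_inf_apply (f g : C₀(X, ℝ)) (t : X) : (-(c0sup (-f) (-g))) t = min (f t) (g t) := by
  change - max (- f t) (- g t) = _
  rw [max_neg_neg, neg_neg]

theorem aux_lat_abs (l : C₀(X, ℝ) →L[ℝ] ℝ)
    (hl : ∀ f g, l (c0sup f g) = max (l f) (l g)) (f : C₀(X, ℝ)) :
    l (c0sup f (-f)) = |l f| := by
  rw [hl, map_neg]; rfl

/-- Lattice functionals on `C₀(X)` are multiples of point evaluations. -/
theorem aux_lat_functional [LocallyCompactSpace X] (l : C₀(X, ℝ) →L[ℝ] ℝ)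
    (hl : ∀ f g, l (c0sup f g) = max (l f) (l g)) (f₁ : C₀(X, ℝ)) (hf₁ : l f₁ ≠ 0) :
    ∃ (c : ℝ) (s : X), 0 < c ∧ ∀ f, l f = c * f s := by
  have key : ∃ s, ∀ f : C₀(X, ℝ), f s = 0 → l f = 0 := by
    by_contra hcon
    push Not at hcon
    choose F hF0 hF1 using hcon
    -- normalise
    have hnorm : ∀ s, ∃ f : C₀(X, ℝ), f s = 0 ∧ l f = 1 := by
      intro s
      refine ⟨|l (F s)|⁻¹ • c0sup (F s) (-(F s)), ?_, ?_⟩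
      · simp [aux_c0sup_apply, hF0]
      · rw [map_smul, aux_lat_abs l hl, smul_eq_mul, inv_mul_cancel₀ (abs_ne_zero.2 (hF1 s))]
    choose H hH0 hH1 using hnorm
    obtain ⟨f₀, hf₀, hf₀n⟩ : ∃ f₀ : C₀(X, ℝ), l f₀ = 1 ∧ ∀ t, 0 ≤ f₀ t := by
      refine ⟨|l f₁|⁻¹ • c0sup f₁ (-f₁), ?_, ?_⟩
      · rw [map_smul, aux_lat_abs l hl, smul_eq_mul, inv_mul_cancel₀ (abs_ne_zero.2 hf₁)]
      · intro t
        have : c0sup f₁ (-f₁) t = |f₁ t| := rfl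
        rw [ZeroAtInftyContinuousMap.smul_apply, this, smul_eq_mul]
        positivity
    obtain ⟨ε, hε, hεl⟩ : ∃ ε > 0, ‖l‖ * ε < 1 := by
      refine ⟨(‖l‖ + 1)⁻¹, by positivity, ?_⟩
      rw [← div_eq_mul_inv, div_lt_one (by positivity)]
      linarith
    have hK := aux_compact f₀ hε
    obtain ⟨S, hS⟩ := hK.elim_finite_subcover (fun s => {t | H s t < ε})
      (fun s => isOpen_lt (map_continuous (H s)) continuous_const)
      (fun t _ => Set.mem_iUnion.2 ⟨t, by simp [hH0, hε]⟩)
    -- finite infimum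
    have hinf : ∀ S : Finset X, ∃ h : C₀(X, ℝ), l h = 1 ∧ (∀ t, h t ≤ f₀ t) ∧
        ∀ s ∈ S, ∀ t, h t ≤ H s t := by
      classical
      intro S
      induction S using Finset.induction_on with
      | empty => exact ⟨f₀, hf₀, fun t => le_rfl, by simp⟩
      | insert s S _ ih =>
        obtain ⟨h, h1, h2, h3⟩ := ih
        refine ⟨-(c0sup (-h) (-(H s))), ?_, ?_, ?_⟩
        · rw [aux_lat_inf l hl, h1, hH1, min_self]
        · intro t; rw [aux_inf_apply]; exact (min_le_left _ _).trans (h2 t)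
        · intro u hu t
          rw [aux_inf_apply]
          rcases Finset.mem_insert.1 hu with rfl | hu
          · exact min_le_right _ _
          · exact (min_le_left _ _).trans (h3 u hu t)
    obtain ⟨h, h1, h2, h3⟩ := hinf S
    -- positive part of h
    have h4 : l (c0sup h 0) = 1 := by rw [hl, h1, map_zero]; norm_num
    have h5 : ‖c0sup h 0‖ ≤ ε := by
      refine aux_norm_le _ hε.le fun t => ?_
      rw [aux_c0sup_apply, ZeroAtInftyContinuousMap.zero_apply, abs_of_nonneg (le_max_right _ _)]
      refine max_le ?_ hε.le
      by_cases ht : ε ≤ |f₀ t|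
      · obtain ⟨s, hs⟩ := Set.mem_iUnion.1 (hS ht)
        obtain ⟨hsS, hs⟩ := Set.mem_iUnion.1 hs
        exact (h3 s hsS t).trans (le_of_lt hs)
      · push Not at ht
        exact (h2 t).trans ((le_abs_self _).trans ht.le)
    have h6 := l.le_opNorm (c0sup h 0)
    rw [h4, norm_one] at h6
    nlinarith [norm_nonneg l, mul_le_mul_of_nonneg_left h5 (norm_nonneg l)]
  obtain ⟨s, hs⟩ := key
  obtain ⟨e, he, -, he0, -⟩ := aux_bump_pt (s := s) isOpen_univ (Set.mem_univ s)
  have hform : ∀ f, l f = l e * f s := by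
    intro f
    have := hs (f - f s • e) (by simp [he])
    rw [map_sub, map_smul, smul_eq_mul] at this
    linarith
  refine ⟨l e, s, ?_, hform⟩
  have h1 : l e = |l e| := by
    rw [← aux_lat_abs l hl, hform (c0sup e (-e))]
    have : c0sup e (-e) s = |e s| := rfl
    rw [this, he]; simp
  rw [h1]
  refine abs_pos.2 fun h => hf₁ ?_
  rw [hform, h, zero_mul]

theorem aux_pt_eq [LocallyCompactSpace X] {c d : ℝ} {s t : X} (hc : c ≠ 0)
    (h : ∀ f : C₀(X, ℝ), c * f s = d * f t) : s = t ∧ c = d := by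
  have hst : s = t := by
    by_contra hst
    obtain ⟨f, h1, h0, -⟩ := aux_bump_pt (s := s) (isOpen_compl_singleton (x := t)) hst
    have := h f
    rw [h1, h0 t (by simp)] at this
    simp at this
    exact hc this
  subst hst
  obtain ⟨f, h1, -⟩ := aux_bump_pt (s := s) isOpen_univ (Set.mem_univ s)
  have := h f
  rw [h1] at this
  exact ⟨rfl, by linarith⟩

theorem aux_symm_lat (T : C₀(X, ℝ) ≃L[ℝ] C₀(X, ℝ))
    (hT : ∀ f₁ f₂ : C₀(X, ℝ), T (c0sup f₁ f₂) = c0sup (T f₁) (T f₂)) :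
    ∀ f₁ f₂ : C₀(X, ℝ), T.symm (c0sup f₁ f₂) = c0sup (T.symm f₁) (T.symm f₂) := by
  intro f g
  apply T.injective
  rw [hT]; simp

/-- evaluation functional -/
def auxEval (t : X) : C₀(X, ℝ) →L[ℝ] ℝ :=
  LinearMap.mkContinuous
    { toFun := fun f => f t
      map_add' := fun _ _ => rfl
      map_smul' := fun _ _ => rfl } 1 (fun f => by
        rw [one_mul]; exact aux_abs_le_norm f t)

theorem auxEval_apply (t : X) (f : C₀(X, ℝ)) : auxEval t f = f t := rfl

theorem aux_rep_pre [LocallyCompactSpace X] (T : C₀(X, ℝ) ≃L[ℝ] C₀(X, ℝ))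
    (hT : ∀ f₁ f₂ : C₀(X, ℝ), T (c0sup f₁ f₂) = c0sup (T f₁) (T f₂)) (t : X) :
    ∃ (c : ℝ) (s : X), 0 < c ∧ ∀ f, T f t = c * f s := by
  obtain ⟨e, he, -⟩ := aux_bump_pt (s := t) isOpen_univ (Set.mem_univ t)
  refine aux_lat_functional ((auxEval t).comp (T : C₀(X, ℝ) →L[ℝ] C₀(X, ℝ))) ?_ (T.symm e) ?_
  · intro f g
    change T (c0sup f g) t = max (T f t) (T g t)
    rw [hT]; rfl
  · change T (T.symm e) t ≠ 0
    simp [he]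

theorem aux_rep_cont [LocallyCompactSpace X] (T : C₀(X, ℝ) ≃L[ℝ] C₀(X, ℝ))
    (b : X → ℝ) (ψ : X → X) (hb : ∀ t, 0 < b t) (h : ∀ t f, T f t = b t * f (ψ t)) :
    Continuous ψ := by
  rw [continuous_iff_continuousAt]
  intro t
  rw [ContinuousAt, _root_.tendsto_nhds]
  intro U hU ht
  obtain ⟨f, h1, h0, -⟩ := aux_bump_pt hU ht
  have h2 : T f t ≠ 0 := by rw [h, h1, mul_one]; exact (hb t).ne'
  filter_upwards [(map_continuous (T f)).continuousAt.eventually_ne h2] with s hs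
  by_contra hn
  apply hs
  rw [h, h0 _ hn, mul_zero]

/-- Representation of lattice isomorphisms. -/
theorem aux_rep [LocallyCompactSpace X] (T : C₀(X, ℝ) ≃L[ℝ] C₀(X, ℝ))
    (hT : ∀ f₁ f₂ : C₀(X, ℝ), T (c0sup f₁ f₂) = c0sup (T f₁) (T f₂)) :
    ∃ (b : X → ℝ) (ψ : X ≃ₜ X) (b' : X → ℝ), (∀ t f, T f t = b t * f (ψ t)) ∧
      (∀ t f, T.symm f t = b' t * f (ψ.symm t)) ∧ (∀ t, 0 < b t) ∧ (∀ t, 0 < b' t) ∧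
      (∀ t, b t * b' (ψ t) = 1) := by
  choose b ψ hb hrep using aux_rep_pre T hT
  choose b' ψ' hb' hrep' using aux_rep_pre T.symm (aux_symm_lat T hT)
  have h1 : ∀ t, t = ψ' (ψ t) ∧ 1 = b t * b' (ψ t) := by
    intro t
    apply aux_pt_eq one_ne_zero
    intro f
    rw [one_mul, mul_assoc, ← hrep', ← hrep, T.apply_symm_apply]
  have h2 : ∀ t, t = ψ (ψ' t) ∧ 1 = b' t * b (ψ' t) := by
    intro t
    apply aux_pt_eq one_ne_zero
    intro f
    rw [one_mul, mul_assoc, ← hrep, ← hrep', T.symm_apply_apply]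
  refine ⟨b, ⟨⟨ψ, ψ', fun t => (h1 t).1.symm, fun t => (h2 t).1.symm⟩,
    aux_rep_cont T b ψ hb hrep, aux_rep_cont T.symm b' ψ' hb' hrep'⟩, b', hrep, hrep', hb, hb',
    fun t => (h1 t).2.symm⟩

end Basic

section NormDef

/-- The weights. -/
theorem aux_weights : ∃ w : ℕ → ℝ, (∀ n, 0 < w n) ∧ w 0 = 2 ∧ Antitone w ∧ Summable w ∧
    ∀ j, ∑' n, w n ≤ (∑ n ∈ Finset.range (j + 1), w n) + w j * (1 / 2) ^ (j + 2) := by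
  have hexp : ∀ j n : ℕ, (2 : ℝ) * (1 / 2) ^ ((n + (j + 1)) * (n + (j + 1) + 3)) ≤
      (2 * (1 / 2) ^ (j * (j + 3)) * (1 / 2) ^ (j + 3)) * (1 / 2) ^ n := by
    intro j n
    rw [mul_assoc, mul_assoc, ← pow_add, ← pow_add]
    refine mul_le_mul_of_nonneg_left ?_ (by norm_num)
    refine pow_le_pow_of_le_one (by norm_num) (by norm_num) ?_
    nlinarith [Nat.zero_le (n * j), Nat.zero_le (n * n)]
  have hgeo : Summable fun n : ℕ => (1 / 2 : ℝ) ^ n := summable_geometric_two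
  have hsum : Summable fun n : ℕ => (2 : ℝ) * (1 / 2) ^ (n * (n + 3)) := by
    rw [← summable_nat_add_iff (0 + 1)]
    refine Summable.of_nonneg_of_le (fun n => by positivity) (hexp 0) ?_
    exact hgeo.mul_left _
  refine ⟨fun n => 2 * (1 / 2) ^ (n * (n + 3)), fun n => by positivity, by norm_num, ?_, hsum, ?_⟩
  · intro a b hab
    refine mul_le_mul_of_nonneg_left ?_ (by norm_num)
    refine pow_le_pow_of_le_one (by norm_num) (by norm_num) ?_
    gcongr
  · intro j
    rw [← hsum.sum_add_tsum_nat_add (j + 1)]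
    gcongr
    have hs1 : Summable fun n : ℕ => (2 : ℝ) * (1 / 2) ^ ((n + (j + 1)) * (n + (j + 1) + 3)) :=
      (summable_nat_add_iff (f := fun n : ℕ => (2 : ℝ) * (1 / 2) ^ (n * (n + 3))) (j + 1)).2 hsum
    have hs2 : Summable fun n : ℕ =>
        ((2 : ℝ) * (1 / 2) ^ (j * (j + 3)) * (1 / 2) ^ (j + 3)) * (1 / 2) ^ n := hgeo.mul_left _
    refine (Summable.tsum_le_tsum (hexp j) hs1 hs2).trans (le_of_eq ?_)
    rw [tsum_mul_left, tsum_geometric_two, pow_succ (1 / 2 : ℝ) (j + 2)]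
    ring

variable {X : Type*} [MetricSpace X] {ι : Type*}

/-- weighted sum functional along a sequence of points -/
def auxP (w : ℕ → ℝ) (p : ℕ → X) (x : C₀(X, ℝ)) : ℝ := ∑' n, w n * |x (p n)|

/-- the new norm -/
def auxN (w : ℕ → ℝ) (Φ : ι → X → X) (t : ℕ → X) (x : C₀(X, ℝ)) : ℝ :=
  max ‖x‖ (⨆ i, auxP w (fun n => Φ i (t n)) x)

variable {w : ℕ → ℝ}

theorem auxP_summable (hw : ∀ n, 0 < w n) (hs : Summable w)
    (p : ℕ → X) (x : C₀(X, ℝ)) : Summable fun n => w n * |x (p n)| :=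
  Summable.of_nonneg_of_le (fun n => mul_nonneg (hw n).le (abs_nonneg _))
    (fun n => mul_le_mul_of_nonneg_left (aux_abs_le_norm x (p n)) (hw n).le) (hs.mul_right ‖x‖)

theorem auxP_le (hw : ∀ n, 0 < w n) (hs : Summable w)
    (p : ℕ → X) (x : C₀(X, ℝ)) : auxP w p x ≤ (∑' n, w n) * ‖x‖ := by
  rw [auxP, ← tsum_mul_right]
  exact Summable.tsum_le_tsum
    (fun n => mul_le_mul_of_nonneg_left (aux_abs_le_norm x (p n)) (hw n).le)
    (auxP_summable hw hs p x) (hs.mul_right ‖x‖)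

theorem auxP_mono (hw : ∀ n, 0 < w n) (hs : Summable w)
    (p : ℕ → X) (x y : C₀(X, ℝ)) (h : ∀ t, |x t| ≤ |y t|) :
    auxP w p x ≤ auxP w p y :=
  Summable.tsum_le_tsum (fun n => mul_le_mul_of_nonneg_left (h (p n)) (hw n).le)
    (auxP_summable hw hs p x) (auxP_summable hw hs p y)

theorem auxP_add (hw : ∀ n, 0 < w n) (hs : Summable w)
    (p : ℕ → X) (x y : C₀(X, ℝ)) :
    auxP w p (x + y) ≤ auxP w p x + auxP w p y := by
  unfold auxP
  rw [← (auxP_summable hw hs p x).tsum_add (auxP_summable hw hs p y)]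
  refine Summable.tsum_le_tsum (fun n => ?_) (auxP_summable hw hs p _)
    ((auxP_summable hw hs p x).add (auxP_summable hw hs p y))
  rw [← mul_add]
  exact mul_le_mul_of_nonneg_left (abs_add_le _ _) (hw n).le

theorem auxP_smul (p : ℕ → X) (c : ℝ) (x : C₀(X, ℝ)) :
    auxP w p (c • x) = |c| * auxP w p x := by
  unfold auxP
  rw [← tsum_mul_left]
  congr 1
  ext n
  rw [ZeroAtInftyContinuousMap.smul_apply, smul_eq_mul, abs_mul]
  ring

theorem auxP_sum_le (hw : ∀ n, 0 < w n) (hs : Summable w)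
    (p : ℕ → X) (s : Finset ℕ) (d : ℕ → ℝ) (hd : ∀ n, 0 ≤ d n)
    (y : ℕ → C₀(X, ℝ)) : auxP w p (∑ j ∈ s, d j • y j) ≤ ∑ j ∈ s, d j * auxP w p (y j) := by
  classical
  induction s using Finset.induction_on with
  | empty => simp [auxP]
  | insert a s ha ih =>
    rw [Finset.sum_insert ha, Finset.sum_insert ha]
    refine (auxP_add hw hs p _ _).trans (add_le_add ?_ ih)
    rw [auxP_smul, abs_of_nonneg (hd a)]

theorem auxN_bdd (hw : ∀ n, 0 < w n) (hs : Summable w)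
    (Φ : ι → X → X) (t : ℕ → X) (x : C₀(X, ℝ)) :
    BddAbove (Set.range fun i => auxP w (fun n => Φ i (t n)) x) :=
  ⟨(∑' n, w n) * ‖x‖, by rintro _ ⟨i, rfl⟩; exact auxP_le hw hs _ x⟩

theorem auxP_le_auxN (hw : ∀ n, 0 < w n) (hs : Summable w)
    (Φ : ι → X → X) (t : ℕ → X) (x : C₀(X, ℝ)) (i : ι) :
    auxP w (fun n => Φ i (t n)) x ≤ auxN w Φ t x :=
  (le_ciSup (auxN_bdd hw hs Φ t x) i).trans (le_max_right _ _)

theorem norm_le_auxN (Φ : ι → X → X) (t : ℕ → X) (x : C₀(X, ℝ)) :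
    ‖x‖ ≤ auxN w Φ t x := le_max_left _ _

theorem auxN_le [Nonempty ι] (Φ : ι → X → X) (t : ℕ → X) (x : C₀(X, ℝ)) {r : ℝ}
    (h1 : ‖x‖ ≤ r) (h2 : ∀ i, auxP w (fun n => Φ i (t n)) x ≤ r) : auxN w Φ t x ≤ r :=
  max_le h1 (ciSup_le h2)

theorem aux_norm_mono (x y : C₀(X, ℝ)) (h : ∀ t, |x t| ≤ |y t|) : ‖x‖ ≤ ‖y‖ :=
  aux_norm_le x (norm_nonneg y) fun t => (h t).trans (aux_abs_le_norm y t)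

theorem auxN_add (hw : ∀ n, 0 < w n) (hs : Summable w)
    [Nonempty ι] (Φ : ι → X → X) (t : ℕ → X) (x y : C₀(X, ℝ)) :
    auxN w Φ t (x + y) ≤ auxN w Φ t x + auxN w Φ t y :=
  auxN_le Φ t _ ((norm_add_le x y).trans (add_le_add (norm_le_auxN Φ t x) (norm_le_auxN Φ t y)))
    fun i => (auxP_add hw hs _ x y).trans
      (add_le_add (auxP_le_auxN hw hs Φ t x i) (auxP_le_auxN hw hs Φ t y i))

theorem auxN_mono (hw : ∀ n, 0 < w n) (hs : Summable w)
    [Nonempty ι] (Φ : ι → X → X) (t : ℕ → X) (x y : C₀(X, ℝ))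
    (h : ∀ t, |x t| ≤ |y t|) : auxN w Φ t x ≤ auxN w Φ t y :=
  auxN_le Φ t _ ((aux_norm_mono x y h).trans (norm_le_auxN Φ t y))
    fun i => (auxP_mono hw hs _ x y h).trans (auxP_le_auxN hw hs Φ t y i)

theorem auxN_smul (Φ : ι → X → X) (t : ℕ → X) (c : ℝ) (x : C₀(X, ℝ)) :
    auxN w Φ t (c • x) = |c| * auxN w Φ t x := by
  unfold auxN
  rw [mul_max_of_nonneg _ _ (abs_nonneg c), Real.mul_iSup_of_nonneg (abs_nonneg c), norm_smul,
    Real.norm_eq_abs]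
  simp_rw [auxP_smul]

theorem auxN_le_mul (hw : ∀ n, 0 < w n) (hs : Summable w)
    [Nonempty ι] (Φ : ι → X → X) (t : ℕ → X) (x : C₀(X, ℝ)) :
    auxN w Φ t x ≤ (1 + ∑' n, w n) * ‖x‖ := by
  have h0 : 0 ≤ ∑' n, w n := tsum_nonneg fun n => (hw n).le
  refine auxN_le Φ t x ?_ fun i => (auxP_le hw hs _ x).trans ?_
  · nlinarith [norm_nonneg x]
  · nlinarith [norm_nonneg x]

/-- invariance of the norm under the group -/
theorem auxN_comp_le (hw : ∀ n, 0 < w n) (hs : Summable w)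
    [Nonempty ι] (Φ : ι → X → X) (t : ℕ → X) (x y : C₀(X, ℝ)) (i : ι)
    (hi : ∀ j, ∃ k, ∀ s, Φ i (Φ j s) = Φ k s) (hy : ∀ s, y s = x (Φ i s)) :
    auxN w Φ t y ≤ auxN w Φ t x := by
  refine auxN_le Φ t y ?_ fun j => ?_
  · refine (aux_norm_le y (norm_nonneg x) fun s => ?_).trans (norm_le_auxN Φ t x)
    rw [hy]; exact aux_abs_le_norm x _
  · obtain ⟨k, hk⟩ := hi j
    refine le_trans (le_of_eq ?_) (auxP_le_auxN hw hs Φ t x k)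
    unfold auxP
    simp_rw [hy, hk]

/-- if the special orbit is avoided, the norm is at most the sup norm -/
theorem auxN_le_norm (hw : ∀ n, 0 < w n) (hs : Summable w)
    [Nonempty ι] (Φ : ι → X → X) (t : ℕ → X) (x : C₀(X, ℝ))
    (h1 : ∑' n, w n ≤ w 0 + 1) (h : ∀ i, x (Φ i (t 0)) = 0) : auxN w Φ t x ≤ ‖x‖ := by
  refine auxN_le Φ t x le_rfl fun i => ?_
  have hh := (auxP_summable hw hs (fun n => Φ i (t n)) x).tsum_eq_zero_add
  have hh2 := hs.tsum_eq_zero_add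
  unfold auxP
  rw [hh, h i]
  simp only [abs_zero, mul_zero, zero_add]
  have h3 : ∑' n, w (n + 1) * |x (Φ i (t (n + 1)))| ≤ (∑' n, w (n + 1)) * ‖x‖ := by
    rw [← tsum_mul_right]
    have hs' : Summable fun n => w (n + 1) := (summable_nat_add_iff 1).2 hs
    exact Summable.tsum_le_tsum
      (fun n => mul_le_mul_of_nonneg_left (aux_abs_le_norm x _) (hw _).le)
      ((summable_nat_add_iff 1).2 (auxP_summable hw hs (fun n => Φ i (t n)) x))
      (hs'.mul_right ‖x‖)
  have h4 : ∑' n, w (n + 1) ≤ 1 := by linarith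
  nlinarith [norm_nonneg x]

/-- first step: the weight of an isometry is at most one -/
theorem aux_weight_le (hw : ∀ n, 0 < w n) (hs : Summable w)
    [LocallyCompactSpace X] [Nonempty ι] (Φ : ι → X → X) (t : ℕ → X)
    (h1 : ∑' n, w n ≤ w 0 + 1)
    (hnd : IsNowhereDense {z | ∃ i, Φ i (t 0) = z})
    (T : C₀(X, ℝ) → C₀(X, ℝ)) (hT : ∀ x, auxN w Φ t (T x) ≤ auxN w Φ t x)
    (b : X → ℝ) (ψ : X ≃ₜ X) (hrep : ∀ s f, T f s = b s * f (ψ s)) (s : X) : b s ≤ 1 := by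
  set O := closure {z | ∃ i, Φ i (t 0) = z} with hO
  have hd : Dense Oᶜ := by
    rw [← interior_eq_empty_iff_dense_compl]; exact hnd
  have hd' : Dense (ψ ⁻¹' Oᶜ) := hd.preimage ψ.isOpenMap
  have hgood : ∀ s ∈ ψ ⁻¹' Oᶜ, b s ≤ 1 := by
    intro s hs'
    obtain ⟨f, f1, f0, fn, fl⟩ := aux_bump_pt (isClosed_closure.isOpen_compl) hs'
    have hN : auxN w Φ t f ≤ ‖f‖ := by
      refine auxN_le_norm hw hs Φ t f h1 fun i => f0 _ ?_
      simp only [Set.mem_compl_iff, not_not]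
      exact subset_closure ⟨i, rfl⟩
    have hf : ‖f‖ ≤ 1 := aux_norm_le f zero_le_one fun u => by
      rw [abs_of_nonneg (fn u)]; exact fl u
    calc b s = T f s := by rw [hrep, f1, mul_one]
      _ ≤ |T f s| := le_abs_self _
      _ ≤ ‖T f‖ := aux_abs_le_norm _ _
      _ ≤ _ := norm_le_auxN Φ t _
      _ ≤ _ := hT f
      _ ≤ _ := hN
      _ ≤ 1 := hf
  obtain ⟨e, e1, -, en, el⟩ := aux_bump_pt (s := ψ s) isOpen_univ (Set.mem_univ _)
  have hclosed : IsClosed {u | T e u ≤ e (ψ u)} :=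
    isClosed_le (map_continuous (T e)) ((map_continuous e).comp ψ.continuous)
  have hsub : ψ ⁻¹' Oᶜ ⊆ {u | T e u ≤ e (ψ u)} := fun u hu => by
    change T e u ≤ e (ψ u)
    rw [hrep]
    nlinarith [hgood u hu, en (ψ u)]
  have : s ∈ {u | T e u ≤ e (ψ u)} := by
    have h2 := closure_minimal hsub hclosed
    rw [hd'.closure_eq] at h2
    exact h2 (Set.mem_univ s)
  have h3 : T e s ≤ e (ψ s) := this
  rw [hrep, e1, mul_one] at h3
  exact h3

end NormDef

section Approx

variable {X : Type*} [MetricSpace X] {ι : Type*}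

theorem aux_separate (Φ : ι → X → X) (hinv : ∀ i, ∃ j, ∀ s, Φ j (Φ i s) = s)
    (heq : ∀ s, ∀ ε > 0, ∃ δ > 0, ∀ u, dist s u < δ → ∀ i, dist (Φ i s) (Φ i u) < ε)
    (p u v : X) (huv : u ≠ v) :
    ∃ δ > 0, ∀ i, dist p (Φ i u) < δ → dist p (Φ i v) < δ → False := by
  have hd : 0 < dist u v := dist_pos.2 huv
  obtain ⟨δ, hδ, h⟩ := heq p (dist u v / 2) (by positivity)
  refine ⟨δ, hδ, fun i h1 h2 => ?_⟩
  obtain ⟨j, hj⟩ := hinv i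
  have h3 := h _ h1 j
  have h4 := h _ h2 j
  rw [hj] at h3 h4
  have := dist_triangle_left u v (Φ j p)
  linarith

theorem aux_approx [LocallyCompactSpace X] {w : ℕ → ℝ} (hw : ∀ n, 0 < w n) (hs : Summable w)
    (hw0 : w 0 = 2) (hanti : Antitone w)
    (htail : ∀ j, ∑' n, w n ≤ (∑ n ∈ Finset.range (j + 1), w n) + w j * (1 / 2) ^ (j + 2))
    [Nonempty ι] (Φ : ι → X → X)
    (hid : ∃ i, ∀ s, Φ i s = s) (hinv : ∀ i, ∃ j, ∀ s, Φ j (Φ i s) = s)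
    (heq : ∀ s, ∀ ε > 0, ∃ δ > 0, ∀ u, dist s u < δ → ∀ i, dist (Φ i s) (Φ i u) < ε)
    (t : ℕ → X) (ht : Function.Injective t)
    (T : C₀(X, ℝ) → C₀(X, ℝ)) (hT : ∀ x, auxN w Φ t (T x) ≤ auxN w Φ t x)
    (ψ : X → X) (hrep : ∀ s f, T f s = f (ψ s)) (k : ℕ) (ε : ℝ) (hε : 0 < ε) :
    ∃ i, ∀ n ≤ k, dist (Φ i (t n)) (ψ (t n)) < ε := by
  classical
  -- uniform separation constant
  obtain ⟨ε', hε', hle, hsep⟩ : ∃ ε' > 0, ε' ≤ ε ∧ ∀ p ≤ k, ∀ u ≤ k, ∀ v ≤ k, u ≠ v →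
      ∀ i, dist (ψ (t p)) (Φ i (t u)) < ε' → dist (ψ (t p)) (Φ i (t v)) < ε' → False := by
    have h1 : ∀ p u v : ℕ, ∀ᶠ r in 𝓝[>] (0 : ℝ), u ≠ v →
        ∀ i, dist (ψ (t p)) (Φ i (t u)) < r → dist (ψ (t p)) (Φ i (t v)) < r → False := by
      intro p u v
      by_cases huv : u = v
      · simp [huv]
      obtain ⟨δ, hδ, h⟩ := aux_separate Φ hinv heq (ψ (t p)) (t u) (t v) (fun h => huv (ht h))
      filter_upwards [Ioo_mem_nhdsGT hδ] with r hr _ i h2 h3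
      exact h i (h2.trans hr.2) (h3.trans hr.2)
    have h2 : ∀ᶠ r in 𝓝[>] (0 : ℝ), ∀ p ∈ Set.Iic k, ∀ u ∈ Set.Iic k, ∀ v ∈ Set.Iic k, u ≠ v →
        ∀ i, dist (ψ (t p)) (Φ i (t u)) < r → dist (ψ (t p)) (Φ i (t v)) < r → False := by
      rw [eventually_all_finite (Set.finite_Iic k)]
      intro p _
      rw [eventually_all_finite (Set.finite_Iic k)]
      intro u _
      rw [eventually_all_finite (Set.finite_Iic k)]
      intro v _
      exact h1 p u v
    obtain ⟨r, hr, hr2⟩ := (h2.and (Ioo_mem_nhdsGT hε)).exists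
    exact ⟨r, hr2.1, hr2.2.le, hr⟩
  -- the functions
  have hy : ∀ j : ℕ, ∃ y : C₀(X, ℝ), (∀ n ≤ j, y (ψ (t n)) = 1) ∧
      (∀ s, (∀ n ≤ j, ε' ≤ dist (ψ (t n)) s) → y s = 0) ∧ (∀ s, 0 ≤ y s) ∧ (∀ s, y s ≤ 1) := by
    intro j
    have hK : IsCompact ((fun n => ψ (t n)) '' Set.Iic j) :=
      ((Set.finite_Iic j).image _).isCompact
    have hU : IsOpen (⋃ n ∈ Set.Iic j, ball (ψ (t n)) ε') :=
      isOpen_biUnion fun n _ => isOpen_ball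
    obtain ⟨y, y1, y0, yn, yl⟩ := aux_bump hK hU (by
      rintro _ ⟨n, hn, rfl⟩
      exact Set.mem_biUnion hn (mem_ball_self hε'))
    refine ⟨y, fun n hn => y1 _ ⟨n, hn, rfl⟩, fun s hsn => y0 s ?_, yn, yl⟩
    intro hsU
    obtain ⟨n, hn, hb⟩ := Set.mem_iUnion₂.1 hsU
    have h5 := hsn n hn
    rw [mem_ball, dist_comm] at hb
    linarith
  choose y y1 y0 yn yl using hy
  set d : ℕ → ℝ := fun j => (w j)⁻¹ with hd
  have hdpos : ∀ j, 0 < d j := fun j => inv_pos.2 (hw j)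
  set Y : C₀(X, ℝ) := ∑ j ∈ Finset.range (k + 1), d j • y j with hY
  set A : ℝ := ∑ j ∈ Finset.range (k + 1), d j * ∑ n ∈ Finset.range (j + 1), w n with hA
  have hYapp : ∀ s, Y s = ∑ j ∈ Finset.range (k + 1), d j * y j s := by
    intro s
    have : Y s = auxEval s Y := rfl
    rw [this, hY, map_sum]
    rfl
  have hYn : ∀ s, 0 ≤ Y s := fun s => by
    rw [hYapp]; exact Finset.sum_nonneg fun j _ => mul_nonneg (hdpos j).le (yn j s)
  -- lower bound
  have hlow : A ≤ auxN w Φ t Y := by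
    obtain ⟨i, hi⟩ := hid
    refine le_trans ?_ ((auxP_le_auxN hw hs Φ t (T Y) i).trans (hT Y))
    have h1 : auxP w (fun n => Φ i (t n)) (T Y) = ∑' n, w n * |T Y (t n)| := by
      unfold auxP; simp_rw [hi]
    have hsm := auxP_summable hw hs t (T Y)
    rw [h1]
    refine le_trans ?_ (hsm.sum_le_tsum (Finset.range (k + 1))
      (fun n _ => mul_nonneg (hw n).le (abs_nonneg _)))
    have h2 : ∀ n, w n * |T Y (t n)| = ∑ j ∈ Finset.range (k + 1), d j * (w n * y j (ψ (t n))) := by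
      intro n
      rw [hrep, abs_of_nonneg (hYn _), hYapp, Finset.mul_sum]
      refine Finset.sum_congr rfl fun j _ => by ring
    simp_rw [h2]
    rw [Finset.sum_comm, hA]
    refine Finset.sum_le_sum fun j hj => ?_
    rw [← Finset.mul_sum]
    refine mul_le_mul_of_nonneg_left ?_ (hdpos j).le
    have hjk : j + 1 ≤ k + 1 := Nat.succ_le_of_lt (Finset.mem_range.1 hj)
    calc ∑ n ∈ Finset.range (j + 1), w n
        = ∑ n ∈ Finset.range (j + 1), w n * y j (ψ (t n)) := by
          refine Finset.sum_congr rfl fun n hn => ?_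
          rw [y1 j n (Nat.lt_succ_iff.1 (Finset.mem_range.1 hn)), mul_one]
      _ ≤ _ := Finset.sum_le_sum_of_subset_of_nonneg (Finset.range_mono hjk)
          fun n _ _ => mul_nonneg (hw n).le (yn j _)
  -- sup norm of Y is smaller
  have hW0 : ∀ j : ℕ, 2 ≤ ∑ n ∈ Finset.range (j + 1), w n := by
    intro j
    rw [← hw0]
    exact Finset.single_le_sum (f := w) (fun n _ => (hw n).le) (Finset.mem_range.2 (Nat.succ_pos j))
  have hYle : ‖Y‖ ≤ A / 2 := by
    have hA0 : ∑ j ∈ Finset.range (k + 1), d j ≤ A / 2 := by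
      rw [hA, Finset.sum_div]
      refine Finset.sum_le_sum fun j _ => ?_
      have := mul_le_mul_of_nonneg_left (hW0 j) (hdpos j).le
      linarith
    have hd0 : 0 ≤ ∑ j ∈ Finset.range (k + 1), d j := Finset.sum_nonneg fun j _ => (hdpos j).le
    refine (aux_norm_le Y hd0 fun s => ?_).trans hA0
    rw [abs_of_nonneg (hYn s), hYapp]
    refine Finset.sum_le_sum fun j _ => ?_
    nlinarith [yl j s, hdpos j]
  have hApos : 1 ≤ A := by
    have h1 : d 0 * ∑ n ∈ Finset.range (0 + 1), w n ≤ A :=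
      Finset.single_le_sum (f := fun j => d j * ∑ n ∈ Finset.range (j + 1), w n)
        (fun j _ => mul_nonneg (hdpos j).le (by linarith [hW0 j]))
        (Finset.mem_range.2 (Nat.succ_pos k))
    have h2 : d 0 * ∑ n ∈ Finset.range (0 + 1), w n = 1 := by
      simp [hd, hw0]
    linarith
  -- choice of the group element
  obtain ⟨i, hi⟩ : ∃ i, A - 1 / 2 < auxP w (fun n => Φ i (t n)) Y := by
    by_contra hcon
    push Not at hcon
    have : auxN w Φ t Y ≤ max (A / 2) (A - 1 / 2) :=
      max_le_max hYle (ciSup_le hcon)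
    have h3 : max (A / 2) (A - 1 / 2) < A := max_lt (by linarith) (by linarith)
    linarith
  -- all the points are in the right unions of balls
  have hmem : ∀ j ≤ k, ∀ n ≤ j, ∃ l ≤ j, dist (ψ (t l)) (Φ i (t n)) < ε' := by
    intro j hj n hn
    by_contra hcon
    push Not at hcon
    have hz : y j (Φ i (t n)) = 0 := y0 j _ hcon
    have hup : auxP w (fun n => Φ i (t n)) (y j) ≤ (∑' n, w n) - w j := by
      have hsm := auxP_summable hw hs (fun n => Φ i (t n)) (y j)
      have h1 := hsm.tsum_eq_add_tsum_ite n
      have h2 := hs.tsum_eq_add_tsum_ite n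
      have h3 : ∑' m, (if m = n then 0 else w m * |y j (Φ i (t m))|) ≤
          ∑' m, (if m = n then 0 else w m) := by
        refine Summable.tsum_le_tsum (fun m => ?_) ?_ ?_
        · split_ifs
          · exact le_rfl
          · rw [abs_of_nonneg (yn j _)]
            nlinarith [hw m, yl j (Φ i (t m))]
        · refine Summable.of_nonneg_of_le (fun m => ?_) (fun m => ?_) hsm
          · split_ifs
            · exact le_rfl
            · exact mul_nonneg (hw m).le (abs_nonneg _)
          · split_ifs
            · exact mul_nonneg (hw m).le (abs_nonneg _)
            · exact le_rfl
        · refine Summable.of_nonneg_of_le (fun m => ?_) (fun m => ?_) hs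
          · split_ifs
            · exact le_rfl
            · exact (hw m).le
          · split_ifs
            · exact (hw m).le
            · exact le_rfl
      have h4 : w j ≤ w n := hanti hn
      unfold auxP
      rw [h1, hz, abs_zero, mul_zero, zero_add]
      linarith
    have hup' : ∀ l, auxP w (fun n => Φ i (t n)) (y l) ≤ ∑' n, w n := by
      intro l
      refine (auxP_le hw hs _ _).trans ?_
      have h1 : ‖y l‖ ≤ 1 := aux_norm_le _ zero_le_one fun s => by
        rw [abs_of_nonneg (yn l s)]; exact yl l s
      have h2 : 0 ≤ ∑' n, w n := tsum_nonneg fun n => (hw n).le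
      nlinarith
    have hPY := auxP_sum_le hw hs (fun n => Φ i (t n)) (Finset.range (k + 1)) d
      (fun j => (hdpos j).le) y
    have hjr : j ∈ Finset.range (k + 1) := Finset.mem_range.2 (Nat.lt_succ_of_le hj)
    have hbound : ∑ l ∈ Finset.range (k + 1), d l * auxP w (fun n => Φ i (t n)) (y l) ≤
        ∑ l ∈ Finset.range (k + 1), (d l * (∑' n, w n) - if l = j then 1 else 0) := by
      refine Finset.sum_le_sum fun l _ => ?_
      split_ifs with hlj
      · subst hlj
        have h1 := mul_le_mul_of_nonneg_left hup (hdpos l).le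
        have h2 : d l * w l = 1 := inv_mul_cancel₀ (hw l).ne'
        rw [mul_sub, h2] at h1
        exact h1
      · rw [sub_zero]
        exact mul_le_mul_of_nonneg_left (hup' l) (hdpos l).le
    rw [Finset.sum_sub_distrib, Finset.sum_ite_eq' _ j, if_pos hjr] at hbound
    have htot : ∑ l ∈ Finset.range (k + 1), d l * (∑' n, w n) ≤
        A + ∑ l ∈ Finset.range (k + 1), (1 / 2 : ℝ) ^ (l + 2) := by
      rw [hA, ← Finset.sum_add_distrib]
      refine Finset.sum_le_sum fun l _ => ?_
      have h1 := mul_le_mul_of_nonneg_left (htail l) (hdpos l).le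
      have h2 : d l * w l = 1 := inv_mul_cancel₀ (hw l).ne'
      rw [mul_add, ← mul_assoc (d l), h2, one_mul] at h1
      exact h1
    have hgeo : ∑ l ∈ Finset.range (k + 1), (1 / 2 : ℝ) ^ (l + 2) ≤ 1 / 2 := by
      have h1 : ∑ l ∈ Finset.range (k + 1), (1 / 2 : ℝ) ^ (l + 2) =
          (∑ l ∈ Finset.range (k + 1), (1 / 2 : ℝ) ^ l) * (1 / 4) := by
        rw [Finset.sum_mul]
        refine Finset.sum_congr rfl fun l _ => ?_
        rw [pow_add]; norm_num
      have h2 := sum_geometric_two_le (k + 1)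
      rw [h1]
      linarith
    linarith
  refine ⟨i, fun n hn => ?_⟩
  obtain ⟨l, hl, hdl⟩ : ∃ l ≤ n, dist (ψ (t l)) (Φ i (t n)) < ε' := hmem n hn n le_rfl
  suffices hall : ∀ n ≤ k, dist (ψ (t n)) (Φ i (t n)) < ε' by
    rw [dist_comm]; exact (hall n hn).trans_le hle
  clear hdl hl l hn n
  intro n
  induction n using Nat.strong_induction_on with
  | _ n ih =>
    intro hn
    obtain ⟨l, hl, hdl⟩ := hmem n hn n le_rfl
    rcases hl.lt_or_eq with hlt | rfl
    · exact (hsep l (hl.trans hn) n hn l (hl.trans hn) hlt.ne' i hdl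
        (ih l hlt (hl.trans hn))).elim
    · exact hdl

/-- Pointwise convergence on a dense sequence upgrades to convergence in the strong sense. -/
theorem aux_cont_conv (F : ℕ → X → X) (θ : X → X) (hθ : Continuous θ)
    (heq : ∀ s, ∀ ε > 0, ∃ δ > 0, ∀ u, dist s u < δ → ∀ n, dist (F n s) (F n u) < ε)
    (D : Set X) (hD : Dense D) (hlim : ∀ s ∈ D, Tendsto (fun n => F n s) atTop (𝓝 (θ s)))
    (s : X) : Tendsto (fun q : ℕ × X => F q.1 q.2) (atTop ×ˢ 𝓝 s) (𝓝 (θ s)) := by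
  rw [Metric.tendsto_nhds]
  intro ε hε
  obtain ⟨δ, hδ, h⟩ := heq s (ε / 4) (by positivity)
  have hθs : ∀ᶠ u in 𝓝 s, dist (θ u) (θ s) < ε / 4 :=
    Metric.tendsto_nhds.1 hθ.continuousAt _ (by positivity)
  have hball : ∀ᶠ u in 𝓝 s, dist s u < δ := by
    filter_upwards [ball_mem_nhds s hδ] with u hu
    rw [dist_comm]; exact hu
  obtain ⟨u, huD, hu1, hu2⟩ := (hD.inter_nhds_nonempty (hθs.and hball))
  have h1 : ∀ᶠ n in atTop, dist (F n u) (θ u) < ε / 4 :=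
    Metric.tendsto_nhds.1 (hlim u huD) _ (by positivity)
  filter_upwards [h1.prod_mk hball] with q hq
  have e1 := h q.2 hq.2 q.1
  have e2 := h u hu2 q.1
  have e3 := hq.1
  have t1 := dist_triangle (F q.1 q.2) (F q.1 s) (θ s)
  have t2 := dist_triangle (F q.1 s) (F q.1 u) (θ s)
  have t3 := dist_triangle (F q.1 u) (θ u) (θ s)
  rw [dist_comm] at e1
  linarith

end Approx

section Unif

variable {X : Type*} [MetricSpace X]

theorem aux_compact_eventually {K : Set X} (hK : IsCompact K) {P : ℕ → X → Prop}
    (hP : ∀ s ∈ K, ∀ᶠ q : ℕ × X in atTop ×ˢ 𝓝 s, P q.1 q.2) : ∀ᶠ n in atTop, ∀ s ∈ K, P n s := by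
  simp only [← eventually_iSup, ← hK.prod_nhdsSet_eq_biSup] at hP
  exact hP.curry.mono fun _ h => h.self_of_nhdsSet

theorem aux_unif (F F' : ℕ → X → X) (θ : X ≃ₜ X) (h1 : ∀ n s, F n (F' n s) = s)
    (h2 : ∀ n s, F' n (F n s) = s)
    (heq : ∀ s, ∀ ε > 0, ∃ δ > 0, ∀ u, dist s u < δ → ∀ n, dist (F n s) (F n u) < ε)
    (heq' : ∀ s, ∀ ε > 0, ∃ δ > 0, ∀ u, dist s u < δ → ∀ n, dist (F' n s) (F' n u) < ε)
    (D : Set X) (hD : Dense D) (hlim : ∀ s ∈ D, Tendsto (fun n => F n s) atTop (𝓝 (θ s)))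
    (x : C₀(X, ℝ)) (ε : ℝ) (hε : 0 < ε) :
    ∀ᶠ n in atTop, ∀ s, |x (F n s) - x (θ s)| < ε := by
  have hF := aux_cont_conv F θ θ.continuous heq D hD hlim
  have hD' : Dense (θ '' D) := θ.surjective.denseRange.dense_image θ.continuous hD
  have hlim' : ∀ s ∈ θ '' D, Tendsto (fun n => F' n s) atTop (𝓝 (θ.symm s)) := by
    rintro _ ⟨u, hu, rfl⟩
    rw [Metric.tendsto_nhds]
    intro r hr
    obtain ⟨δ, hδ, h⟩ := heq' (θ u) r hr
    filter_upwards [Metric.tendsto_nhds.1 (hlim u hu) δ hδ] with n hn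
    rw [dist_comm] at hn
    have := h _ hn n
    rwa [h2, ← θ.symm_apply_apply u, θ.apply_symm_apply] at this
  have hF' := aux_cont_conv F' θ.symm θ.symm.continuous heq' _ hD' hlim'
  have hP : ∀ s, ∀ᶠ q : ℕ × X in atTop ×ˢ 𝓝 s, |x (F q.1 q.2) - x (θ q.2)| < ε := by
    intro s
    have e1 : Tendsto (fun q : ℕ × X => x (F q.1 q.2)) (atTop ×ˢ 𝓝 s) (𝓝 (x (θ s))) :=
      ((map_continuous x).tendsto _).comp (hF s)
    have e2 : Tendsto (fun q : ℕ × X => x (θ q.2)) (atTop ×ˢ 𝓝 s) (𝓝 (x (θ s))) :=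
      (((map_continuous x).comp θ.continuous).tendsto s).comp tendsto_snd
    have e3 := (e1.sub e2).abs
    rw [sub_self, abs_zero] at e3
    exact e3.eventually_lt_const hε
  have hK := aux_compact x (half_pos hε)
  have hK1 : IsCompact (θ ⁻¹' {t | ε / 2 ≤ |x t|}) := θ.isCompact_preimage.2 hK
  have c1 := aux_compact_eventually hK1 (P := fun n s => |x (F n s) - x (θ s)| < ε)
    (fun s _ => hP s)
  have c2 := aux_compact_eventually hK
    (P := fun n u => |x (F n (F' n u)) - x (θ (F' n u))| < ε) (fun u _ => by
      have e1 : Tendsto (fun q : ℕ × X => (q.1, F' q.1 q.2)) (atTop ×ˢ 𝓝 u)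
        (atTop ×ˢ 𝓝 (θ.symm u)) := tendsto_fst.prodMk (hF' u)
      exact e1.eventually (hP (θ.symm u)))
  filter_upwards [c1, c2] with n n1 n2 s
  by_cases hs1 : ε / 2 ≤ |x (θ s)|
  · exact n1 s hs1
  by_cases hs2 : ε / 2 ≤ |x (F n s)|
  · have := n2 (F n s) hs2
    rwa [h2] at this
  push Not at hs1 hs2
  have := abs_sub (x (F n s)) (x (θ s))
  linarith

/-- multiplication operator -/
def auxMul (p : X → ℝ) (hp : Continuous p) (B : ℝ) (hB : ∀ t, |p t| ≤ B) :
    C₀(X, ℝ) →L[ℝ] C₀(X, ℝ) :=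
  LinearMap.mkContinuous
    { toFun := fun f =>
        { toFun := fun t => p t * f t
          continuous_toFun := hp.mul (map_continuous f)
          zero_at_infty' := by
            refine squeeze_zero_norm (a := fun t => B * |f t|) (fun t => ?_) ?_
            · rw [Real.norm_eq_abs, abs_mul]
              exact mul_le_mul_of_nonneg_right (hB t) (abs_nonneg _)
            · have := ((zero_at_infty f).abs).const_mul B
              simpa using this }
      map_add' := fun f g => by
        ext t
        exact mul_add (p t) (f t) (g t)
      map_smul' := fun c f => by
        ext t
        exact mul_left_comm (p t) c (f t) } |B| (fun f => by
        refine aux_norm_le _ (by positivity) fun t => ?_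
        change |p t * f t| ≤ _
        rw [abs_mul]
        exact mul_le_mul ((hB t).trans (le_abs_self B)) (aux_abs_le_norm f t) (abs_nonneg _)
          (abs_nonneg _))

theorem auxMul_apply (p : X → ℝ) (hp : Continuous p) (B : ℝ) (hB : ∀ t, |p t| ≤ B)
    (f : C₀(X, ℝ)) (t : X) : auxMul p hp B hB f t = p t * f t := rfl

/-- an injective dense sequence -/
theorem aux_dense_seq [SecondCountableTopology X] [Nonempty X]
    (h : ∀ s : X, IsNowhereDense ({s} : Set X)) :
    ∃ t : ℕ → X, Function.Injective t ∧ Dense (Set.range t) := by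
  obtain ⟨S, hSc, hSd⟩ := TopologicalSpace.exists_countable_dense X
  have hinf : S.Infinite := by
    intro hfin
    have hU : S = Set.univ := by rw [← hSd.closure_eq, hfin.isClosed.closure_eq]
    rw [hU] at hfin
    have : Finite X := Set.finite_univ_iff.1 hfin
    have hd : DiscreteTopology X := inferInstance
    obtain ⟨s⟩ := ‹Nonempty X›
    have h1 := h s
    rw [IsNowhereDense, closure_singleton, (isOpen_discrete ({s} : Set X)).interior_eq] at h1
    exact Set.singleton_ne_empty s h1
  have : Infinite S := hinf.to_subtype
  have : Countable S := hSc.to_subtype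
  obtain ⟨hden⟩ := nonempty_denumerable S
  let e := (Denumerable.eqv S).symm
  refine ⟨fun n => (e n : X), fun a b hab => e.injective (Subtype.ext hab), ?_⟩
  have : Set.range (fun n => (e n : X)) = S := by
    ext s
    constructor
    · rintro ⟨n, rfl⟩
      exact (e n).2
    · intro hs
      exact ⟨e.symm ⟨s, hs⟩, by simp⟩
  rw [this]
  exact hSd

end Unif

/-- **Corollary 6.6 (display of bounded groups).** Let `X` be a locally compact Polish
space and `G` a bounded relatively SOT-closed group of lattice isomorphisms of `C₀(X)`
with weights `a_g` and homeomorphisms `φ_g`, both families equicontinuous on compact sets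
and all `φ_g`-orbits nowhere dense. Let `m_G(t) = (inf_{g ∈ G} a_g(t))⁻¹`. Then there is
an equivalent lattice norm `N` on `C₀(X)` whose group of `N`-isometric lattice
isomorphisms is exactly `{x ↦ m_G · g(m_G⁻¹ · x) : g ∈ G}`. -/
theorem stmt18 {X : Type*} [MetricSpace X] [PolishSpace X] [LocallyCompactSpace X]
    (G : Set (C₀(X, ℝ) ≃L[ℝ] C₀(X, ℝ)))
    (h_id : ContinuousLinearEquiv.refl ℝ C₀(X, ℝ) ∈ G)
    (h_comp : ∀ g ∈ G, ∀ h ∈ G, g.trans h ∈ G)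
    (h_inv : ∀ g ∈ G, g.symm ∈ G)
    (h_lat : ∀ g ∈ G, ∀ f₁ f₂ : C₀(X, ℝ), g (c0sup f₁ f₂) = c0sup (g f₁) (g f₂))
    (C : ℝ) (hC : 1 ≤ C)
    (h_bdd : ∀ g ∈ G, ∀ x : C₀(X, ℝ), C⁻¹ * ‖x‖ ≤ ‖g x‖ ∧ ‖g x‖ ≤ C * ‖x‖)
    (a : (C₀(X, ℝ) ≃L[ℝ] C₀(X, ℝ)) → X → ℝ)
    (φ : (C₀(X, ℝ) ≃L[ℝ] C₀(X, ℝ)) → X ≃ₜ X)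
    (hrep : ∀ g ∈ G, ∀ (f : C₀(X, ℝ)) (t : X), g f t = a g t * f (φ g t))
    (ha_cont : ∀ g ∈ G, Continuous (a g))
    (ha_pos : ∀ g ∈ G, ∃ c > 0, ∀ t, c ≤ a g t)
    (ha_bd : ∀ g ∈ G, ∃ C' : ℝ, ∀ t, a g t ≤ C')
    (ha_equi : ∀ K : Set X, IsCompact K → ∀ ε > 0, ∃ δ > 0, ∀ s ∈ K, ∀ t ∈ K,
      dist s t < δ → ∀ g ∈ G, |a g s - a g t| < ε)
    (hφ_equi : ∀ K : Set X, IsCompact K → ∀ ε > 0, ∃ δ > 0, ∀ s ∈ K, ∀ t ∈ K,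
      dist s t < δ → ∀ g ∈ G, dist (φ g s) (φ g t) < ε)
    (h_nd : ∀ t : X, IsNowhereDense {z : X | ∃ g ∈ G, φ g t = z})
    (h_closed : ∀ gn : ℕ → C₀(X, ℝ) ≃L[ℝ] C₀(X, ℝ), (∀ n, gn n ∈ G) →
      ∀ T : C₀(X, ℝ) ≃L[ℝ] C₀(X, ℝ),
        (∀ f₁ f₂ : C₀(X, ℝ), T (c0sup f₁ f₂) = c0sup (T f₁) (T f₂)) →
        (∀ f : C₀(X, ℝ), Tendsto (fun n => ‖gn n f - T f‖) atTop (𝓝 0)) →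
        T ∈ G)
    (m : X → ℝ) (hm : ∀ t, m t = (⨅ g : G, a g.1 t)⁻¹) :
    ∃ N : C₀(X, ℝ) → ℝ,
      (∀ x y : C₀(X, ℝ), N (x + y) ≤ N x + N y) ∧
      (∀ (c : ℝ) (x : C₀(X, ℝ)), N (c • x) = |c| * N x) ∧
      (∀ x y : C₀(X, ℝ), (∀ t, |x t| ≤ |y t|) → N x ≤ N y) ∧
      (∃ c > 0, ∃ C'' : ℝ, ∀ x : C₀(X, ℝ), c * ‖x‖ ≤ N x ∧ N x ≤ C'' * ‖x‖) ∧
      (∀ T : C₀(X, ℝ) ≃L[ℝ] C₀(X, ℝ),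
        (∀ f₁ f₂ : C₀(X, ℝ), T (c0sup f₁ f₂) = c0sup (T f₁) (T f₂)) →
        ((∀ x : C₀(X, ℝ), N (T x) = N x) ↔
          ∃ g ∈ G, ∀ x x' : C₀(X, ℝ), (∀ t, x' t = (m t)⁻¹ * x t) →
            ∀ t, T x t = m t * g x' t)) := by
  rcases isEmpty_or_nonempty X with hX | hX
  · refine ⟨fun x => ‖x‖, norm_add_le, fun c x => by simp only [norm_smul, Real.norm_eq_abs],
      aux_norm_mono, ⟨1, one_pos, 1, fun x => by simp⟩, fun T _ => ?_⟩
    refine ⟨fun _ => ⟨_, h_id, fun _ _ _ t => (hX.false t).elim⟩, fun _ x => ?_⟩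
    rw [ZeroAtInftyContinuousMap.eq_of_empty (T x) x]
  have hC0 : 0 < C := by linarith
  have ha0 : ∀ g ∈ G, ∀ t, 0 < a g t := fun g hg t => by
    obtain ⟨c, hc, h⟩ := ha_pos g hg
    exact hc.trans_le (h t)
  -- composition rules
  have hcomp : ∀ g ∈ G, ∀ h ∈ G, ∀ t, φ (h.trans g) t = φ h (φ g t) ∧
      a (h.trans g) t = a g t * a h (φ g t) := by
    intro g hg h hh t
    have hgh := h_comp h hh g hg
    apply aux_pt_eq (ha0 _ hgh t).ne'
    intro f
    rw [← hrep _ hgh, mul_assoc, ← hrep h hh, ← hrep g hg]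
    rfl
  have hidr : ∀ t, φ (ContinuousLinearEquiv.refl ℝ C₀(X, ℝ)) t = t := by
    intro t
    refine (aux_pt_eq (d := 1) (ha0 _ h_id t).ne' fun f => ?_).1
    rw [← hrep _ h_id, one_mul]
    rfl
  have hsymm : ∀ g ∈ G, ∀ t, φ g.symm (φ g t) = t ∧ a g t * a g.symm (φ g t) = 1 := by
    intro g hg t
    have hgs := h_inv g hg
    have := aux_pt_eq (c := 1) (d := a g t * a g.symm (φ g t)) (s := t)
      (t := φ g.symm (φ g t)) one_ne_zero (fun f => by
        rw [one_mul, mul_assoc, ← hrep _ hgs, ← hrep g hg, g.apply_symm_apply])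
    exact ⟨this.1.symm, this.2.symm⟩
  have hsymm' : ∀ g ∈ G, ∀ t, φ g (φ g.symm t) = t := by
    intro g hg t
    have := (hsymm g.symm (h_inv g hg) t).1
    rwa [ContinuousLinearEquiv.symm_symm] at this
  -- bounds on the weights
  have ha_le : ∀ g ∈ G, ∀ t, a g t ≤ C := by
    intro g hg t
    obtain ⟨f, f1, -, fn, fl⟩ := aux_bump_pt (s := φ g t) isOpen_univ (Set.mem_univ _)
    have hf : ‖f‖ ≤ 1 := aux_norm_le f zero_le_one fun u => by
      rw [abs_of_nonneg (fn u)]; exact fl u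
    calc a g t = g f t := by rw [hrep g hg, f1, mul_one]
      _ ≤ |g f t| := le_abs_self _
      _ ≤ ‖g f‖ := aux_abs_le_norm _ _
      _ ≤ C * ‖f‖ := (h_bdd g hg f).2
      _ ≤ C := by nlinarith
  have ha_ge : ∀ g ∈ G, ∀ t, C⁻¹ ≤ a g t := by
    intro g hg t
    have h1 := (hsymm g hg t).2
    have h2 := ha_le _ (h_inv g hg) (φ g t)
    rw [inv_le_iff_one_le_mul₀ hC0]
    nlinarith [ha0 g hg t]
  -- the infimum
  have : Nonempty G := ⟨⟨_, h_id⟩⟩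
  set μ : X → ℝ := fun t => ⨅ g : G, a g.1 t with hμ
  have hbddb : ∀ t, BddBelow (Set.range fun g : G => a g.1 t) := fun t =>
    ⟨C⁻¹, by rintro _ ⟨g, rfl⟩; exact ha_ge g.1 g.2 t⟩
  have hμ_le : ∀ g ∈ G, ∀ t, μ t ≤ a g t := fun g hg t => ciInf_le (hbddb t) ⟨g, hg⟩
  have hμ_ge : ∀ t, C⁻¹ ≤ μ t := fun t => le_ciInf fun g => ha_ge g.1 g.2 t
  have hμ0 : ∀ t, 0 < μ t := fun t => (inv_pos.2 hC0).trans_le (hμ_ge t)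
  have hμC : ∀ t, μ t ≤ C := fun t => (hμ_le _ h_id t).trans (ha_le _ h_id t)
  have hm' : ∀ t, m t = (μ t)⁻¹ := hm
  have hcoc_le : ∀ g ∈ G, ∀ t, μ t ≤ a g t * μ (φ g t) := by
    intro g hg t
    rw [← div_le_iff₀' (ha0 g hg t)]
    refine le_ciInf fun h => ?_
    rw [div_le_iff₀' (ha0 g hg t), ← (hcomp g hg h.1 h.2 t).2]
    exact hμ_le _ (h_comp h.1 h.2 g hg) t
  have hcoc : ∀ g ∈ G, ∀ t, μ t = a g t * μ (φ g t) := by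
    intro g hg t
    refine le_antisymm (hcoc_le g hg t) ?_
    have h1 := hcoc_le _ (h_inv g hg) (φ g t)
    rw [(hsymm g hg t).1] at h1
    have h2 := mul_le_mul_of_nonneg_left h1 (ha0 g hg t).le
    rwa [← mul_assoc, (hsymm g hg t).2, one_mul] at h2
  have hμ_cont : Continuous μ := by
    rw [continuous_iff_continuousAt]
    intro t
    obtain ⟨K, hK, hKt⟩ := exists_compact_mem_nhds t
    rw [ContinuousAt, Metric.tendsto_nhds]
    intro ε hε
    obtain ⟨δ, hδ, h⟩ := ha_equi K hK (ε / 2) (by positivity)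
    filter_upwards [hKt, ball_mem_nhds t hδ] with s hsK hsb
    have h1 := h s hsK t (mem_of_mem_nhds hKt) hsb
    rw [Real.dist_eq]
    refine lt_of_le_of_lt ?_ (half_lt_self hε)
    rw [abs_le]
    constructor
    · have : μ t - ε / 2 ≤ μ s := le_ciInf fun g => by
        have h2 := abs_lt.1 (h1 g.1 g.2)
        have h3 := hμ_le g.1 g.2 t
        linarith
      linarith
    · have : μ s - ε / 2 ≤ μ t := le_ciInf fun g => by
        have h2 := abs_lt.1 (h1 g.1 g.2)
        have h3 := hμ_le g.1 g.2 s
        linarith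
      linarith
  -- pointwise equicontinuity
  have heq : ∀ s, ∀ ε > 0, ∃ δ > 0, ∀ u, dist s u < δ → ∀ i : G,
      dist (φ i.1 s) (φ i.1 u) < ε := by
    intro s ε hε
    obtain ⟨K, hK, hKs⟩ := exists_compact_mem_nhds s
    obtain ⟨δ, hδ, h⟩ := hφ_equi K hK ε hε
    obtain ⟨r, hr, hrK⟩ := Metric.mem_nhds_iff.1 hKs
    refine ⟨min δ r, lt_min hδ hr, fun u hu i => ?_⟩
    refine h s (mem_of_mem_nhds hKs) u (hrK ?_) (hu.trans_le (min_le_left _ _)) i.1 i.2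
    rw [mem_ball, dist_comm]
    exact hu.trans_le (min_le_right _ _)
  -- multiplication operators
  have hμi_cont : Continuous fun t => (μ t)⁻¹ := hμ_cont.inv₀ fun t => (hμ0 t).ne'
  have hBμ : ∀ t, |μ t| ≤ C := fun t => by rw [abs_of_pos (hμ0 t)]; exact hμC t
  have hBμi : ∀ t, |(μ t)⁻¹| ≤ C := fun t => by
    rw [abs_of_pos (inv_pos.2 (hμ0 t))]
    exact inv_le_of_inv_le₀ hC0 (hμ_ge t)
  let M : C₀(X, ℝ) ≃L[ℝ] C₀(X, ℝ) := ContinuousLinearEquiv.equivOfInverse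
    (auxMul _ hμi_cont C hBμi) (auxMul μ hμ_cont C hBμ)
    (fun f => by
      ext t
      rw [auxMul_apply, auxMul_apply, mul_inv_cancel_left₀ (hμ0 t).ne'])
    (fun f => by
      ext t
      rw [auxMul_apply, auxMul_apply, inv_mul_cancel_left₀ (hμ0 t).ne'])
  have hM : ∀ f t, M f t = (μ t)⁻¹ * f t := fun f t => rfl
  have hMs : ∀ f t, M.symm f t = μ t * f t := fun f t => rfl
  -- the weights and the points
  obtain ⟨w, hw, hw0, hanti, hs, htail⟩ := aux_weights
  obtain ⟨t, ht, htd⟩ := aux_dense_seq (X := X) (fun s => by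
    refine (h_nd s).mono ?_
    rintro _ rfl
    exact ⟨_, h_id, hidr _⟩)
  let Φ : G → X → X := fun i => φ i.1
  have htail1 : ∑' n, w n ≤ w 0 + 1 := by
    have := htail 0
    rw [hw0] at this ⊢
    norm_num [hw0] at this
    linarith
  have hnd0 : IsNowhereDense {z | ∃ i, Φ i (t 0) = z} := by
    refine (h_nd (t 0)).mono ?_
    rintro _ ⟨i, rfl⟩
    exact ⟨i.1, i.2, rfl⟩
  have hΦid : ∃ i, ∀ s, Φ i s = s := ⟨⟨_, h_id⟩, hidr⟩
  have hΦinv : ∀ i, ∃ j, ∀ s, Φ j (Φ i s) = s := fun i =>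
    ⟨⟨_, h_inv i.1 i.2⟩, fun s => (hsymm i.1 i.2 s).1⟩
  have hΦcomp : ∀ i j, ∃ k, ∀ s, Φ i (Φ j s) = Φ k s := fun i j =>
    ⟨⟨_, h_comp i.1 i.2 j.1 j.2⟩, fun s => (hcomp j.1 j.2 i.1 i.2 s).1.symm⟩
  refine ⟨auxN w Φ t, auxN_add hw hs Φ t, auxN_smul Φ t, auxN_mono hw hs Φ t,
    ⟨1, one_pos, 1 + ∑' n, w n, fun x => ⟨by rw [one_mul]; exact norm_le_auxN Φ t x,
      auxN_le_mul hw hs Φ t x⟩⟩, fun T hT => ⟨fun hiso => ?_, ?_⟩⟩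
  · obtain ⟨b, ψ, b', hr, hr', hb, hb', hbb⟩ := aux_rep T hT
    have hb1 : ∀ s, b s ≤ 1 :=
      aux_weight_le hw hs Φ t htail1 hnd0 T (fun x => (hiso x).le) b ψ hr
    have hb1' : ∀ s, b' s ≤ 1 :=
      aux_weight_le hw hs Φ t htail1 hnd0 T.symm (fun x => by
        have := hiso (T.symm x)
        rw [T.apply_symm_apply] at this
        exact this.ge) b' ψ.symm hr'
    have hrT : ∀ s f, T f s = f (ψ s) := by
      intro s f
      have h1 : b s = 1 := by
        refine le_antisymm (hb1 s) ?_
        have := hbb s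
        nlinarith [hb s, hb1' (ψ s)]
      rw [hr, h1, one_mul]
    have happ : ∀ k : ℕ, ∃ i, ∀ n ≤ k, dist (Φ i (t n)) (ψ (t n)) < 1 / ((k : ℝ) + 1) :=
      fun k => aux_approx hw hs hw0 hanti htail Φ hΦid hΦinv heq t ht T (fun x => (hiso x).le)
        ψ hrT k _ (by positivity)
    choose gk hgk using happ
    have hlim : ∀ s ∈ Set.range t, Tendsto (fun n => Φ (gk n) s) atTop (𝓝 (ψ s)) := by
      rintro _ ⟨n, rfl⟩
      rw [tendsto_iff_dist_tendsto_zero]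
      refine squeeze_zero' (Eventually.of_forall fun _ => dist_nonneg) ?_
        tendsto_one_div_add_atTop_nhds_zero_nat
      filter_upwards [eventually_ge_atTop n] with k hk using (hgk k n hk).le
    have hunif := aux_unif (fun n => Φ (gk n)) (fun n => φ (gk n).1.symm) ψ
      (fun n s => hsymm' _ (gk n).2 s) (fun n s => (hsymm _ (gk n).2 s).1)
      (fun s ε hε => by
        obtain ⟨δ, hδ, h⟩ := heq s ε hε
        exact ⟨δ, hδ, fun u hu n => h u hu (gk n)⟩)
      (fun s ε hε => by
        obtain ⟨δ, hδ, h⟩ := heq s ε hε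
        exact ⟨δ, hδ, fun u hu n => h u hu ⟨_, h_inv _ (gk n).2⟩⟩)
      _ htd hlim
    let S : C₀(X, ℝ) ≃L[ℝ] C₀(X, ℝ) := M.trans (T.trans M.symm)
    have hSapp : ∀ f s, S f s = μ s * T (M f) s := fun f s => rfl
    have hSG : S ∈ G := by
      refine h_closed (fun n => (gk n).1) (fun n => (gk n).2) S ?_ ?_
      · intro f₁ f₂
        ext s
        rw [hSapp, aux_c0sup_apply, hSapp, hSapp, hrT, hrT, hrT, hM, hM, hM, aux_c0sup_apply,
          mul_max_of_nonneg _ _ (inv_pos.2 (hμ0 _)).le, mul_max_of_nonneg _ _ (hμ0 _).le]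
      · intro f
        rw [Metric.tendsto_nhds]
        intro ε hε
        have hε' : 0 < ε / (2 * C) := by positivity
        filter_upwards [hunif (M f) _ hε'] with n hn
        rw [dist_zero_right, norm_norm]
        refine lt_of_le_of_lt ?_ (half_lt_self hε)
        refine aux_norm_le _ (by positivity) fun s => ?_
        rw [ZeroAtInftyContinuousMap.sub_apply, hSapp, hrT, hrep _ (gk n).2]
        have h1 : a (gk n).1 s * f (φ (gk n).1 s) = μ s * M f (Φ (gk n) s) := by
          rw [hM, hcoc _ (gk n).2 s, mul_assoc, mul_inv_cancel_left₀ (hμ0 _).ne']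
        rw [h1, ← mul_sub, abs_mul]
        have h2 := mul_le_mul (hBμ s) (hn s).le (abs_nonneg _) hC0.le
        refine h2.trans (le_of_eq ?_)
        field_simp
    refine ⟨S, hSG, fun x x' hx s => ?_⟩
    have h1 : M x' = x := by
      ext u
      rw [hM, hx, hm', inv_inv, inv_mul_cancel_left₀ (hμ0 u).ne']
    rw [hSapp, h1, hm', inv_mul_cancel_left₀ (hμ0 s).ne']
  · rintro ⟨g, hg, hTg⟩ x
    have hTx : ∀ s, T x s = x (φ g s) := by
      intro s
      rw [hTg x (M.symm x) (fun u => by rw [hMs, hm', inv_inv]) s, hrep g hg, hMs, hm',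
        ← mul_assoc (a g s), ← hcoc g hg s, inv_mul_cancel_left₀ (hμ0 s).ne']
    refine le_antisymm ?_ ?_
    · exact auxN_comp_le hw hs Φ t x (T x) ⟨g, hg⟩ (hΦcomp _) hTx
    · refine auxN_comp_le hw hs Φ t (T x) x ⟨_, h_inv g hg⟩ (hΦcomp _) fun s => ?_
      rw [hTx]
      exact congrArg x (hsymm' g hg s).symm

end
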